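/- (Guardedness of NB in Otway–Rees.) If evs ∈ or, B ∉ bad and Says B Server ⟨Nonce NA, Agent A, Agent B, X, Crypt (shrK B) ⟨Nonce NA, Nonce NB, Agent A, Agent B⟩⟩ ∈ set evs, then Guard NB {shrK B} (spies evs); consequently Nonce NB ∉ analz (spies evs). -/

import Mathlib

inductive agent : Type
  | Server : agent
  | Friend : ℕ → agent
  | Spy : agent
deriving DecidableEq

inductive msg : Type
  | Agent : agent → msg
  | Number : ℕ → msg
  | Nonce : ℕ → msg
  | Key : ℕ → msg
  | Hash : msg → msg
  | MPair : msg → msg → msg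
  | Crypt : ℕ → msg → msg
deriving DecidableEq

inductive partsP (H : Set msg) : msg → Prop
  | Inj : ∀ X, X ∈ H → partsP H X
  | Fst : ∀ X Y, partsP H (msg.MPair X Y) → partsP H X
  | Snd : ∀ X Y, partsP H (msg.MPair X Y) → partsP H Y
  | Body : ∀ K X, partsP H (msg.Crypt K X) → partsP H X

/-- `parts H`: sub-components of messages of `H`. -/
def parts (H : Set msg) : Set msg := {X | partsP H X}

inductive analzP (invKey : ℕ → ℕ) (H : Set msg) : msg → Prop
  | Inj : ∀ X, X ∈ H → analzP invKey H X
  | Fst : ∀ X Y, analzP invKey H (msg.MPair X Y) → analzP invKey H X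
  | Snd : ∀ X Y, analzP invKey H (msg.MPair X Y) → analzP invKey H Y
  | Decrypt : ∀ K X, analzP invKey H (msg.Crypt K X) →
      analzP invKey H (msg.Key (invKey K)) → analzP invKey H X

/-- `analz invKey H`: what can be obtained by decomposing and decrypting messages of `H`. -/
def analz (invKey : ℕ → ℕ) (H : Set msg) : Set msg := {X | analzP invKey H X}

inductive synthP (H : Set msg) : msg → Prop
  | Inj : ∀ X, X ∈ H → synthP H X
  | Ag : ∀ a, synthP H (msg.Agent a)
  | Num : ∀ n, synthP H (msg.Number n)
  | Hsh : ∀ X, synthP H X → synthP H (msg.Hash X)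
  | Pr : ∀ X Y, synthP H X → synthP H Y → synthP H (msg.MPair X Y)
  | Cry : ∀ K X, synthP H X → msg.Key K ∈ H → synthP H (msg.Crypt K X)

/-- `synth H`: messages that can be synthesized from `H`. -/
def synth (H : Set msg) : Set msg := {X | synthP H X}

inductive guardP (invKey : ℕ → ℕ) (n : ℕ) (Ks : Set ℕ) : msg → Prop
  | No_Nonce : ∀ X, msg.Nonce n ∉ parts {X} → guardP invKey n Ks X
  | Guard : ∀ K X, invKey K ∈ Ks → guardP invKey n Ks (msg.Crypt K X)
  | Cry : ∀ K X, guardP invKey n Ks X → guardP invKey n Ks (msg.Crypt K X)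
  | Pr : ∀ X Y, guardP invKey n Ks X → guardP invKey n Ks Y →
      guardP invKey n Ks (msg.MPair X Y)

/-- `guard n Ks`: messages in which `Nonce n` is guarded by the keys of `Ks`. -/
def guardMsg (invKey : ℕ → ℕ) (n : ℕ) (Ks : Set ℕ) : Set msg := {X | guardP invKey n Ks X}

/-- `Guard n Ks H`: every message of `H` lies in `guard n Ks`. -/
def Guard (invKey : ℕ → ℕ) (n : ℕ) (Ks : Set ℕ) (H : Set msg) : Prop :=
  ∀ X ∈ H, X ∈ guardMsg invKey n Ks
inductive event : Type
  | Says : agent → agent → msg → event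
deriving DecidableEq

def msgOf : event → msg
  | event.Says _ _ X => X

/-- Set of messages sent in a trace. -/
def sent (evs : List event) : Set msg :=
  {X | ∃ A B, event.Says A B X ∈ evs}
/-- Initial knowledge of each agent in a shared-key infrastructure:
every agent knows its own shared key; the spy moreover knows
the shared keys of the bad agents. -/
def initStateS (shrK : agent → ℕ) (bad : Set agent) : agent → Set msg :=
  fun A =>
    match A with
    | agent.Spy => {X | ∃ B ∈ bad, X = msg.Key (shrK B)}
    | _ => {msg.Key (shrK A)}

/-- `spies evs`: the shared keys of the bad agents and every message sent in `evs`. -/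
def spiesS (shrK : agent → ℕ) (bad : Set agent) (evs : List event) : Set msg :=
  initStateS shrK bad agent.Spy ∪ sent evs

/-- `used evs`: parts of all agents' initial knowledge and of all messages sent in `evs`. -/
def usedS (shrK : agent → ℕ) (bad : Set agent) (evs : List event) : Set msg :=
  parts ((⋃ A, initStateS shrK bad A) ∪ sent evs)
/-- The Otway–Rees protocol. -/
inductive orp (invKey : ℕ → ℕ) (shrK : agent → ℕ) (bad : Set agent) : List event → Prop
  | Nil : orp invKey shrK bad []
  | Fake : ∀ evs B X, orp invKey shrK bad evs →
      X ∈ synth (analz invKey (spiesS shrK bad evs)) →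
      orp invKey shrK bad (event.Says agent.Spy B X :: evs)
  | OR1 : ∀ evs A B NA, orp invKey shrK bad evs →
      msg.Nonce NA ∉ usedS shrK bad evs →
      orp invKey shrK bad (event.Says A B (msg.MPair (msg.Nonce NA)
        (msg.MPair (msg.Agent A) (msg.MPair (msg.Agent B)
          (msg.Crypt (shrK A)
            (msg.MPair (msg.Nonce NA) (msg.MPair (msg.Agent A) (msg.Agent B))))))) :: evs)
  | OR2 : ∀ evs A A' B NA NB X, orp invKey shrK bad evs →
      msg.Nonce NB ∉ usedS shrK bad evs →
      event.Says A' B (msg.MPair (msg.Nonce NA)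
        (msg.MPair (msg.Agent A) (msg.MPair (msg.Agent B) X))) ∈ evs →
      orp invKey shrK bad (event.Says B agent.Server (msg.MPair (msg.Nonce NA)
        (msg.MPair (msg.Agent A) (msg.MPair (msg.Agent B) (msg.MPair X
          (msg.Crypt (shrK B) (msg.MPair (msg.Nonce NA) (msg.MPair (msg.Nonce NB)
            (msg.MPair (msg.Agent A) (msg.Agent B))))))))) :: evs)
  | OR3 : ∀ evs A B B' NA NB KAB, orp invKey shrK bad evs →
      msg.Key KAB ∉ usedS shrK bad evs →
      event.Says B' agent.Server (msg.MPair (msg.Nonce NA)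
        (msg.MPair (msg.Agent A) (msg.MPair (msg.Agent B) (msg.MPair
          (msg.Crypt (shrK A)
            (msg.MPair (msg.Nonce NA) (msg.MPair (msg.Agent A) (msg.Agent B))))
          (msg.Crypt (shrK B) (msg.MPair (msg.Nonce NA) (msg.MPair (msg.Nonce NB)
            (msg.MPair (msg.Agent A) (msg.Agent B))))))))) ∈ evs →
      orp invKey shrK bad (event.Says agent.Server B (msg.MPair (msg.Nonce NA)
        (msg.MPair (msg.Crypt (shrK A) (msg.MPair (msg.Nonce NA) (msg.Key KAB)))
          (msg.Crypt (shrK B) (msg.MPair (msg.Nonce NB) (msg.Key KAB))))) :: evs)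
  | OR4 : ∀ evs A B S NA NB KAB X Y, orp invKey shrK bad evs →
      event.Says B agent.Server (msg.MPair (msg.Nonce NA)
        (msg.MPair (msg.Agent A) (msg.MPair (msg.Agent B) (msg.MPair X
          (msg.Crypt (shrK B) (msg.MPair (msg.Nonce NA) (msg.MPair (msg.Nonce NB)
            (msg.MPair (msg.Agent A) (msg.Agent B))))))))) ∈ evs →
      event.Says S B (msg.MPair (msg.Nonce NA) (msg.MPair Y
        (msg.Crypt (shrK B) (msg.MPair (msg.Nonce NB) (msg.Key KAB))))) ∈ evs →
      orp invKey shrK bad (event.Says B A (msg.MPair (msg.Nonce NA) Y) :: evs)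

/-!
A message in which `NB` is guarded by `shrK B` can be opened only with `shrK B`, and an honest
agent's shared key never travels, so the spy's decompositions and forgeries stay guarded.

The induction over traces is about the certificate `Crypt (shrK B) ⟨NA, NB, A, B⟩`, wherever it
occurs in the traffic, rather than about the event in which `B` sends it. The spy cannot forge it,
so it first appears in an OR2 step of `B` in which `NB` is fresh: until then `NB` does not occur at
all, and that step itself sends it guarded. Afterwards every freshly chosen nonce differs from
`NB`, and in OR3 the server reveals a nonce only under a protection with which it received it.
-/

section Parts

open msg

variable {G H : Set msg} {X : msg}

theorem subset_parts : H ⊆ parts H := fun X hX => .Inj X hX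

theorem parts_subset_parts (hGH : G ⊆ parts H) : parts G ⊆ parts H := by
  intro Z (hZ : partsP G Z)
  induction hZ with
  | Inj X hX => exact hGH hX
  | Fst X Y _ ih => exact .Fst X Y ih
  | Snd X Y _ ih => exact .Snd X Y ih
  | Body K X _ ih => exact .Body K X ih

theorem parts_mono (hGH : G ⊆ H) : parts G ⊆ parts H :=
  parts_subset_parts (hGH.trans subset_parts)

theorem parts_singleton_subset (hX : X ∈ parts H) : parts {X} ⊆ parts H :=
  parts_subset_parts (Set.singleton_subset_iff.mpr hX)

theorem parts_insert (X : msg) (H : Set msg) : parts (insert X H) = parts {X} ∪ parts H := by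
  apply Set.Subset.antisymm
  · intro Z (hZ : partsP (insert X H) Z)
    induction hZ with
    | Inj Y hY => exact hY.imp (fun h => .Inj Y h) (fun h => .Inj Y h)
    | Fst Y Y' _ ih => exact ih.imp (.Fst Y Y') (.Fst Y Y')
    | Snd Y Y' _ ih => exact ih.imp (.Snd Y Y') (.Snd Y Y')
    | Body K Y _ ih => exact ih.imp (.Body K Y) (.Body K Y)
  · exact Set.union_subset (parts_mono (by simp)) (parts_mono (Set.subset_insert X H))

theorem parts_eq_self (hpair : ∀ X Y, MPair X Y ∉ H) (hcrypt : ∀ K X, Crypt K X ∉ H) :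
    parts H = H := by
  apply Set.Subset.antisymm _ subset_parts
  intro Z (hZ : partsP H Z)
  induction hZ with
  | Inj _ hX => exact hX
  | Fst X Y _ ih => exact absurd ih (hpair X Y)
  | Snd X Y _ ih => exact absurd ih (hpair X Y)
  | Body K X _ ih => exact absurd ih (hcrypt K X)

@[simp]
theorem parts_singleton_agent (A : agent) : parts {Agent A} = {Agent A} :=
  parts_eq_self (by simp) (by simp)

@[simp]
theorem parts_singleton_number (n : ℕ) : parts {Number n} = {Number n} :=
  parts_eq_self (by simp) (by simp)

@[simp]
theorem parts_singleton_nonce (n : ℕ) : parts {Nonce n} = {Nonce n} :=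
  parts_eq_self (by simp) (by simp)

@[simp]
theorem parts_singleton_key (K : ℕ) : parts {Key K} = {Key K} :=
  parts_eq_self (by simp) (by simp)

@[simp]
theorem parts_singleton_hash (X : msg) : parts {Hash X} = {Hash X} :=
  parts_eq_self (by simp) (by simp)

@[simp]
theorem parts_singleton_pair (X Y : msg) :
    parts {MPair X Y} = insert (MPair X Y) (parts {X} ∪ parts {Y}) := by
  have hpair : MPair X Y ∈ parts {MPair X Y} := subset_parts rfl
  apply Set.Subset.antisymm
  · intro Z (hZ : partsP {MPair X Y} Z)
    induction hZ with
    | Inj Z hZ => exact .inl hZ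
    | Fst U V _ ih =>
      rcases ih with hUV | hX | hY
      · exact .inr (.inl (subset_parts (MPair.inj hUV).1))
      · exact .inr (.inl (.Fst U V hX))
      · exact .inr (.inr (.Fst U V hY))
    | Snd U V _ ih =>
      rcases ih with hUV | hX | hY
      · exact .inr (.inr (subset_parts (MPair.inj hUV).2))
      · exact .inr (.inl (.Snd U V hX))
      · exact .inr (.inr (.Snd U V hY))
    | Body K U _ ih =>
      rcases ih.resolve_left nofun with hX | hY
      · exact .inr (.inl (.Body K U hX))
      · exact .inr (.inr (.Body K U hY))
  · exact Set.insert_subset hpair (Set.union_subset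
      (parts_singleton_subset (.Fst X Y hpair)) (parts_singleton_subset (.Snd X Y hpair)))

@[simp]
theorem parts_singleton_crypt (K : ℕ) (X : msg) :
    parts {Crypt K X} = insert (Crypt K X) (parts {X}) := by
  have hcrypt : Crypt K X ∈ parts {Crypt K X} := subset_parts rfl
  apply Set.Subset.antisymm
  · intro Z (hZ : partsP {Crypt K X} Z)
    induction hZ with
    | Inj Z hZ => exact .inl hZ
    | Fst U V _ ih => exact .inr (.Fst U V (ih.resolve_left nofun))
    | Snd U V _ ih => exact .inr (.Snd U V (ih.resolve_left nofun))
    | Body K' U _ ih =>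
      rcases ih with hU | hX
      · exact .inr (subset_parts (Crypt.inj hU).2)
      · exact .inr (.Body K' U hX)
  · exact Set.insert_subset hcrypt (parts_singleton_subset (.Body K X hcrypt))

end Parts

section Fake

open msg

variable {invKey : ℕ → ℕ} {H : Set msg} {X Y : msg} {K : ℕ}

theorem analz_subset_parts : analz invKey H ⊆ parts H := by
  intro X (hX : analzP invKey H X)
  induction hX with
  | Inj X hX => exact .Inj X hX
  | Fst X Y _ ih => exact .Fst X Y ih
  | Snd X Y _ ih => exact .Snd X Y ih
  | Decrypt K X _ _ ih _ => exact .Body K X ih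

theorem parts_synth_subset : parts (synth H) ⊆ parts H ∪ synth H := by
  intro Z (hZ : partsP (synth H) Z)
  induction hZ with
  | Inj X hX => exact .inr hX
  | Fst X Y _ ih =>
    rcases ih with h | ⟨_, h⟩ | _ | _ | _ | ⟨_, _, hX, _⟩
    · exact .inl (.Fst X Y h)
    · exact .inl (.Fst X Y (subset_parts h))
    · exact .inr hX
  | Snd X Y _ ih =>
    rcases ih with h | ⟨_, h⟩ | _ | _ | _ | ⟨_, _, _, hY⟩
    · exact .inl (.Snd X Y h)
    · exact .inl (.Snd X Y (subset_parts h))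
    · exact .inr hY
  | Body K X _ ih =>
    rcases ih with h | ⟨_, h⟩ | _ | _ | _ | _ | ⟨_, _, hX, _⟩
    · exact .inl (.Body K X h)
    · exact .inl (.Body K X (subset_parts h))
    · exact .inr hX

theorem parts_insert_subset_of_mem_synth_analz (hX : X ∈ synth (analz invKey H)) :
    parts (insert X H) ⊆ parts H ∪ synth (analz invKey H) := by
  have hinsert : insert X H ⊆ synth (analz invKey H) :=
    Set.insert_subset hX fun Y hY => .Inj Y (.Inj Y hY)
  calc parts (insert X H)
      ⊆ parts (synth (analz invKey H)) := parts_mono hinsert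
    _ ⊆ parts (analz invKey H) ∪ synth (analz invKey H) := parts_synth_subset
    _ ⊆ parts H ∪ synth (analz invKey H) :=
      Set.union_subset_union_left _ (parts_subset_parts analz_subset_parts)

theorem key_mem_parts_of_mem_parts_insert_synth (hX : X ∈ synth (analz invKey H))
    (hK : Key K ∈ parts (insert X H)) : Key K ∈ parts H := by
  rcases parts_insert_subset_of_mem_synth_analz hX hK with h | ⟨_, h⟩
  · exact h
  · exact analz_subset_parts h

theorem crypt_mem_parts_of_mem_parts_insert_synth (hX : X ∈ synth (analz invKey H))
    (hK : Key K ∉ analz invKey H) (hY : Crypt K Y ∈ parts (insert X H)) :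
    Crypt K Y ∈ parts H := by
  rcases parts_insert_subset_of_mem_synth_analz hX hY with
    h | ⟨_, h⟩ | _ | _ | _ | _ | ⟨_, _, _, hKey⟩
  · exact h
  · exact analz_subset_parts h
  · exact absurd hKey hK

end Fake

section Guard

open msg

variable {invKey : ℕ → ℕ} {n : ℕ} {Ks : Set ℕ} {H : Set msg} {X Y : msg}

@[simp]
theorem agent_mem_guardMsg (A : agent) : Agent A ∈ guardMsg invKey n Ks :=
  .No_Nonce _ (by simp)

@[simp]
theorem number_mem_guardMsg (m : ℕ) : Number m ∈ guardMsg invKey n Ks :=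
  .No_Nonce _ (by simp)

@[simp]
theorem key_mem_guardMsg (K : ℕ) : Key K ∈ guardMsg invKey n Ks :=
  .No_Nonce _ (by simp)

@[simp]
theorem hash_mem_guardMsg (X : msg) : Hash X ∈ guardMsg invKey n Ks :=
  .No_Nonce _ (by simp)

@[simp]
theorem nonce_mem_guardMsg {m : ℕ} : Nonce m ∈ guardMsg invKey n Ks ↔ m ≠ n := by
  constructor
  · rintro ⟨_, hn⟩ rfl
    exact hn (subset_parts rfl)
  · intro hmn
    exact .No_Nonce _ (by simpa using hmn.symm)

@[simp]
theorem pair_mem_guardMsg :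
    MPair X Y ∈ guardMsg invKey n Ks ↔ X ∈ guardMsg invKey n Ks ∧ Y ∈ guardMsg invKey n Ks := by
  constructor
  · rintro (⟨_, hn⟩ | _ | _ | ⟨_, _, hX, hY⟩)
    · simp only [parts_singleton_pair, Set.mem_insert_iff, Set.mem_union, not_or] at hn
      exact ⟨.No_Nonce X hn.2.1, .No_Nonce Y hn.2.2⟩
    · exact ⟨hX, hY⟩
  · rintro ⟨hX, hY⟩
    exact .Pr X Y hX hY

@[simp]
theorem crypt_mem_guardMsg {K : ℕ} :
    Crypt K X ∈ guardMsg invKey n Ks ↔ invKey K ∈ Ks ∨ X ∈ guardMsg invKey n Ks := by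
  constructor
  · rintro (⟨_, hn⟩ | ⟨_, _, hK⟩ | ⟨_, _, hX⟩)
    · simp only [parts_singleton_crypt, Set.mem_insert_iff, not_or] at hn
      exact .inr (.No_Nonce X hn.2)
    · exact .inl hK
    · exact .inr hX
  · rintro (hK | hX)
    · exact .Guard K X hK
    · exact .Cry K X hX

theorem guard_analz (hH : Guard invKey n Ks H) (hKs : ∀ K ∈ Ks, Key K ∉ analz invKey H) :
    Guard invKey n Ks (analz invKey H) := by
  intro X (hX : analzP invKey H X)
  induction hX with
  | Inj X hX => exact hH X hX
  | Fst X Y _ ih => exact (pair_mem_guardMsg.mp ih).1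
  | Snd X Y _ ih => exact (pair_mem_guardMsg.mp ih).2
  | Decrypt K X _ hK ih _ =>
    exact (crypt_mem_guardMsg.mp ih).resolve_left fun hKs' => hKs _ hKs' hK

theorem guard_synth (hH : Guard invKey n Ks H) : Guard invKey n Ks (synth H) := by
  intro X (hX : synthP H X)
  induction hX with
  | Inj X hX => exact hH X hX
  | Ag A => exact agent_mem_guardMsg A
  | Num m => exact number_mem_guardMsg m
  | Hsh X _ _ => exact hash_mem_guardMsg X
  | Pr X Y _ _ hX hY => exact .Pr X Y hX hY
  | Cry K X _ _ hX => exact .Cry K X hX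

theorem nonce_notMem_analz_of_guard (hH : Guard invKey n Ks H)
    (hKs : ∀ K ∈ Ks, Key K ∉ analz invKey H) : Nonce n ∉ analz invKey H :=
  fun hn => nonce_mem_guardMsg.mp (guard_analz hH hKs _ hn) rfl

end Guard

section Trace

open msg event

variable {invKey : ℕ → ℕ} {shrK : agent → ℕ} {bad : Set agent} {evs : List event}
  {A B : agent} {X : msg}

theorem spiesS_nil : spiesS shrK bad [] = (fun C => Key (shrK C)) '' bad := by
  ext X
  simp [spiesS, initStateS, sent, eq_comm]

theorem parts_spiesS_nil : parts (spiesS shrK bad []) = (fun C => Key (shrK C)) '' bad := by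
  rw [spiesS_nil]
  exact parts_eq_self (by simp) (by simp)

theorem spiesS_cons :
    spiesS shrK bad (Says A B X :: evs) = insert X (spiesS shrK bad evs) := by
  ext Z
  simp only [spiesS, sent, Set.mem_union, Set.mem_insert_iff, Set.mem_ofPred_eq, List.mem_cons,
    Says.injEq]
  grind

theorem mem_spiesS_of_says (hX : Says A B X ∈ evs) : X ∈ spiesS shrK bad evs :=
  .inr ⟨A, B, hX⟩

theorem mem_parts_spiesS_cons {Z : msg} :
    Z ∈ parts (spiesS shrK bad (Says A B X :: evs)) ↔
      Z ∈ parts {X} ∨ Z ∈ parts (spiesS shrK bad evs) := by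
  rw [spiesS_cons, parts_insert, Set.mem_union]

theorem mem_parts_spiesS_of_says {Z : msg} (hX : Says A B X ∈ evs) (hZ : Z ∈ parts {X}) :
    Z ∈ parts (spiesS shrK bad evs) :=
  parts_singleton_subset (subset_parts (mem_spiesS_of_says hX)) hZ

theorem parts_spiesS_subset_usedS : parts (spiesS shrK bad evs) ⊆ usedS shrK bad evs :=
  parts_mono (Set.union_subset_union_left _ (Set.subset_iUnion (initStateS shrK bad) agent.Spy))

theorem key_shrK_mem_usedS (hspy : agent.Spy ∈ bad) (A : agent) :
    Key (shrK A) ∈ usedS shrK bad evs := by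
  refine subset_parts (.inl (Set.mem_iUnion.mpr ⟨A, ?_⟩))
  cases A with
  | Server => exact rfl
  | Friend i => exact rfl
  | Spy => exact ⟨agent.Spy, hspy, rfl⟩

theorem guard_spiesS_cons {n : ℕ} {Ks : Set ℕ} (hX : X ∈ guardMsg invKey n Ks)
    (hG : Guard invKey n Ks (spiesS shrK bad evs)) :
    Guard invKey n Ks (spiesS shrK bad (Says A B X :: evs)) :=
  spiesS_cons ▸ Set.forall_mem_insert.mpr ⟨hX, hG⟩

theorem guard_spiesS_of_fresh {n : ℕ} {Ks : Set ℕ} (hfresh : Nonce n ∉ usedS shrK bad evs) :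
    Guard invKey n Ks (spiesS shrK bad evs) :=
  fun Y hY => .No_Nonce Y fun hn => hfresh
    (parts_spiesS_subset_usedS (parts_singleton_subset (subset_parts hY) hn))

end Trace

section OtwayRees

open msg event

variable {invKey : ℕ → ℕ} {shrK : agent → ℕ} {bad : Set agent} {evs : List event}
  {A B : agent} {NA NB : ℕ}

theorem mem_bad_of_key_shrK_mem_parts_spiesS (hinj : Function.Injective shrK)
    (hspy : agent.Spy ∈ bad) (hevs : orp invKey shrK bad evs)
    (hK : Key (shrK B) ∈ parts (spiesS shrK bad evs)) : B ∈ bad := by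
  induction hevs with
  | Nil =>
    rw [parts_spiesS_nil] at hK
    obtain ⟨C, hC, hCB⟩ := hK
    rwa [← hinj (Key.inj hCB)]
  | Fake evs C X _ hX ih =>
    rw [spiesS_cons] at hK
    exact ih (key_mem_parts_of_mem_parts_insert_synth hX hK)
  | OR1 evs A' B' NA' _ _ ih =>
    exact ih ((mem_parts_spiesS_cons.mp hK).resolve_left (by simp))
  | OR2 evs A' S B' NA' NB' X _ _ hsays ih =>
    rcases mem_parts_spiesS_cons.mp hK with hnew | hold
    · have hX : Key (shrK B) ∈ parts {X} := by simpa using hnew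
      exact ih (mem_parts_spiesS_of_says hsays (by simp [hX]))
    · exact ih hold
  | OR3 evs A' B' _ NA' NB' KAB _ hfresh _ ih =>
    rcases mem_parts_spiesS_cons.mp hK with hnew | hold
    · have hKAB : shrK B = KAB := by simpa using hnew
      exact absurd (hKAB ▸ key_shrK_mem_usedS hspy B) hfresh
    · exact ih hold
  | OR4 evs A' B' S NA' NB' KAB _ Y _ _ hsays ih =>
    rcases mem_parts_spiesS_cons.mp hK with hnew | hold
    · have hY : Key (shrK B) ∈ parts {Y} := by simpa using hnew
      exact ih (mem_parts_spiesS_of_says hsays (by simp [hY]))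
    · exact ih hold

theorem key_shrK_notMem_analz_spiesS (hinj : Function.Injective shrK)
    (hspy : agent.Spy ∈ bad) (hevs : orp invKey shrK bad evs) (hB : B ∉ bad) :
    Key (shrK B) ∉ analz invKey (spiesS shrK bad evs) := fun hK =>
  hB (mem_bad_of_key_shrK_mem_parts_spiesS hinj hspy hevs (analz_subset_parts hK))

/-- The certificate that `B` encrypts for the server in step OR2; it binds the run identifier `NA`
to the nonce `NB` chosen by `B`. -/
def nbCert (shrK : agent → ℕ) (A B : agent) (NA NB : ℕ) : msg :=
  Crypt (shrK B) (MPair (Nonce NA) (MPair (Nonce NB) (MPair (Agent A) (Agent B))))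

/-- The message that `B` sends to the server in step OR2. The component `X`, meant to be the
certificate of `A`, is arbitrary because `B` cannot read it. -/
def or2Request (shrK : agent → ℕ) (A B : agent) (NA NB : ℕ) (X : msg) : msg :=
  MPair (Nonce NA) (MPair (Agent A) (MPair (Agent B) (MPair X (nbCert shrK A B NA NB))))

theorem ne_of_fresh_of_nbCert_mem_parts {n : ℕ} (hfresh : Nonce n ∉ usedS shrK bad evs)
    (hcert : nbCert shrK A B NA NB ∈ parts (spiesS shrK bad evs)) : n ≠ NB := by
  rintro rfl
  exact hfresh (parts_spiesS_subset_usedS (parts_singleton_subset hcert (by simp [nbCert])))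

theorem nbCert_mem_parts_or2Request {A' B' : agent} {NA' NB' : ℕ} {X : msg}
    (hcert : nbCert shrK A B NA NB ∈ parts {or2Request shrK A' B' NA' NB' X}) :
    nbCert shrK A B NA NB ∈ parts {X} ∨ B = B' ∧ NB = NB' := by
  have hcert_cases : nbCert shrK A B NA NB = nbCert shrK A' B' NA' NB' ∨
      nbCert shrK A B NA NB ∈ parts {X} := by
    simpa [or2Request, nbCert] using hcert
  rcases hcert_cases with heq | hX
  · simp only [nbCert, Crypt.injEq, MPair.injEq, Nonce.injEq, Agent.injEq] at heq
    exact .inr ⟨heq.2.2.2.2, heq.2.2.1⟩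
  · exact .inl hX

theorem nbCert_mem_parts_spiesS_or2 {A' B' C S : agent} {NA' NB' : ℕ} {X : msg}
    (hsays : Says S B' (MPair (Nonce NA') (MPair (Agent A') (MPair (Agent B') X))) ∈ evs)
    (hcert : nbCert shrK A B NA NB ∈
      parts (spiesS shrK bad (Says B' C (or2Request shrK A' B' NA' NB' X) :: evs))) :
    nbCert shrK A B NA NB ∈ parts (spiesS shrK bad evs) ∨ B = B' ∧ NB = NB' := by
  rcases mem_parts_spiesS_cons.mp hcert with hnew | hold
  · exact (nbCert_mem_parts_or2Request hnew).imp_left fun hX =>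
      mem_parts_spiesS_of_says hsays (by simp [hX])
  · exact .inl hold

theorem or2Request_mem_guardMsg {n : ℕ} {Ks : Set ℕ} {X : msg}
    (hforwarded : MPair (Nonce NA) (MPair (Agent A) (MPair (Agent B) X)) ∈ guardMsg invKey n Ks)
    (hNB : invKey (shrK B) ∈ Ks ∨ NB ≠ n) :
    or2Request shrK A B NA NB X ∈ guardMsg invKey n Ks := by
  simp only [or2Request, nbCert, pair_mem_guardMsg, crypt_mem_guardMsg, nonce_mem_guardMsg,
    agent_mem_guardMsg, true_and, and_true] at hforwarded ⊢
  exact ⟨hforwarded.1, hforwarded.2, hNB.imp_right fun h => ⟨hforwarded.1, h⟩⟩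

theorem or3Reply_mem_guardMsg {n KAB : ℕ} {Ks : Set ℕ} {X : msg}
    (hrequest : or2Request shrK A B NA NB X ∈ guardMsg invKey n Ks) :
    MPair (Nonce NA) (MPair (Crypt (shrK A) (MPair (Nonce NA) (Key KAB)))
      (Crypt (shrK B) (MPair (Nonce NB) (Key KAB)))) ∈ guardMsg invKey n Ks := by
  simp only [or2Request, nbCert, pair_mem_guardMsg, crypt_mem_guardMsg, nonce_mem_guardMsg,
    agent_mem_guardMsg, key_mem_guardMsg, true_and, and_true] at hrequest ⊢
  exact ⟨hrequest.1, .inr hrequest.1, hrequest.2.2.imp_right And.right⟩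

theorem guard_spiesS_or2 {C S : agent} {n : ℕ} {Ks : Set ℕ} {X : msg}
    (hG : Guard invKey n Ks (spiesS shrK bad evs))
    (hsays : Says S B (MPair (Nonce NA) (MPair (Agent A) (MPair (Agent B) X))) ∈ evs)
    (hNB : invKey (shrK B) ∈ Ks ∨ NB ≠ n) :
    Guard invKey n Ks (spiesS shrK bad (Says B C (or2Request shrK A B NA NB X) :: evs)) :=
  guard_spiesS_cons (or2Request_mem_guardMsg (hG _ (mem_spiesS_of_says hsays)) hNB) hG

theorem guard_spiesS_of_nbCert_mem_parts (hsym : invKey (shrK B) = shrK B)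
    (hinj : Function.Injective shrK) (hspy : agent.Spy ∈ bad) (hevs : orp invKey shrK bad evs)
    (hB : B ∉ bad) (hcert : nbCert shrK A B NA NB ∈ parts (spiesS shrK bad evs)) :
    Guard invKey NB {shrK B} (spiesS shrK bad evs) := by
  induction hevs with
  | Nil => simp [parts_spiesS_nil, nbCert] at hcert
  | Fake evs C X hevs hX ih =>
    have hK := key_shrK_notMem_analz_spiesS hinj hspy hevs hB
    rw [spiesS_cons] at hcert
    have hG := ih (crypt_mem_parts_of_mem_parts_insert_synth hX hK hcert)
    exact guard_spiesS_cons (guard_synth (guard_analz hG (by simpa using hK)) X hX) hG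
  | OR1 evs A' B' NA' _ hfresh ih =>
    have hold := (mem_parts_spiesS_cons.mp hcert).resolve_left (by simp [nbCert])
    have hne : NA' ≠ NB := ne_of_fresh_of_nbCert_mem_parts hfresh hold
    exact guard_spiesS_cons (by simp [hne]) (ih hold)
  | OR2 evs A' S B' NA' NB' X _ hfresh hsays ih =>
    rcases nbCert_mem_parts_spiesS_or2 hsays hcert with hold | ⟨rfl, rfl⟩
    · have hne : NB' ≠ NB := ne_of_fresh_of_nbCert_mem_parts hfresh hold
      exact guard_spiesS_or2 (ih hold) hsays (.inr hne)
    · exact guard_spiesS_or2 (guard_spiesS_of_fresh hfresh) hsays (.inl hsym)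
  | OR3 evs A' B' S NA' NB' KAB _ _ hsays ih =>
    have hG := ih ((mem_parts_spiesS_cons.mp hcert).resolve_left (by simp [nbCert]))
    exact guard_spiesS_cons (or3Reply_mem_guardMsg (hG _ (mem_spiesS_of_says hsays))) hG
  | OR4 evs A' B' S NA' NB' KAB _ Y _ _ hsays ih =>
    have hold : nbCert shrK A B NA NB ∈ parts (spiesS shrK bad evs) := by
      rcases mem_parts_spiesS_cons.mp hcert with hnew | hold
      · have hY : nbCert shrK A B NA NB ∈ parts {Y} := by simpa [nbCert] using hnew
        exact mem_parts_spiesS_of_says hsays (by simp [hY])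
      · exact hold
    have hG := ih hold
    have hsaid := hG _ (mem_spiesS_of_says hsays)
    simp only [pair_mem_guardMsg] at hsaid
    exact guard_spiesS_cons (pair_mem_guardMsg.mpr ⟨hsaid.1, hsaid.2.1⟩) hG

theorem Guard_NB_or_general (hsym : invKey (shrK B) = shrK B) (hinj : Function.Injective shrK)
    (hspy : agent.Spy ∈ bad) (hevs : orp invKey shrK bad evs) (hB : B ∉ bad)
    (hcert : nbCert shrK A B NA NB ∈ parts (spiesS shrK bad evs)) :
    Guard invKey NB {shrK B} (spiesS shrK bad evs) ∧
      Nonce NB ∉ analz invKey (spiesS shrK bad evs) := by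
  have hG := guard_spiesS_of_nbCert_mem_parts hsym hinj hspy hevs hB hcert
  have hK := key_shrK_notMem_analz_spiesS hinj hspy hevs hB
  exact ⟨hG, nonce_notMem_analz_of_guard hG (by simpa using hK)⟩

end OtwayRees

/-- Guardedness and secrecy of `NB` in Otway–Rees. -/
theorem Guard_NB_or
    (invKey : ℕ → ℕ) (shrK : agent → ℕ) (bad : Set agent)
    (hinv : ∀ K, invKey (invKey K) = K)
    (hsym : ∀ A, invKey (shrK A) = shrK A)
    (hinj : Function.Injective shrK)
    (hspy : agent.Spy ∈ bad)
    (evs : List event) (A B : agent) (NA NB : ℕ) (X : msg)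
    (hevs : orp invKey shrK bad evs) (hB : B ∉ bad)
    (hsays : event.Says B agent.Server (msg.MPair (msg.Nonce NA)
      (msg.MPair (msg.Agent A) (msg.MPair (msg.Agent B) (msg.MPair X
        (msg.Crypt (shrK B) (msg.MPair (msg.Nonce NA) (msg.MPair (msg.Nonce NB)
          (msg.MPair (msg.Agent A) (msg.Agent B))))))))) ∈ evs) :
    Guard invKey NB {shrK B} (spiesS shrK bad evs) ∧
      msg.Nonce NB ∉ analz invKey (spiesS shrK bad evs) := by
  exact Guard_NB_or_general (A := A) (NA := NA) (hsym B) hinj hspy hevs hB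
    (mem_parts_spiesS_of_says hsays (by simp [nbCert]))
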